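/- arXiv:2504.00807 — 2 statements merged into one kernel-verified Lean document; each statement's English description precedes it below -/
import Mathlib

section
/- Let T = (V, root, par) be a narrow rooted directed tree. Then the bounded Cesàro operator C_T on ℓ²(V) satisfies ‖C_T‖ ≥ 2. -/
/-!
For a test function that depends only on the depth and is supported on the path from the root to a
vertex `v`, the quadratic form of the Cesàro operator is that of the classical Cesàro matrix
truncated at `dep v`. With the values `x n = 1 / √(n + 1)` the means are at least
`2 * x n - 2 / (n + 1)`, because `∑ k < n, x k ≥ 2 √(n + 1) - 2`; so the form is at least twice the
square norm `∑ 1 / (n + 1)` up to a bounded error, and the harmonic series diverges.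

Arbitrarily long paths exist because `C δ_root` takes the value `1 / (dep v + 1)` at `v` and
is square summable: on an infinite tree the depth tends to infinity along the cofinite filter.
-/

noncomputable section

open scoped ENNReal

/-- A rooted directed tree encoded by a vertex set `V`, a root, and a parent map. -/
structure TreeData (V : Type) where
  root : V
  par : V → V
  par_root : par root = root
  hroot : ∀ v : V, ∃ n : ℕ, par^[n] v = root

namespace TreeData

variable {V : Type}

open scoped Classical in
/-- The depth of a vertex: the least `n` with `par^[n] v = root`. -/
def dep (T : TreeData V) (v : V) : ℕ := Nat.find (T.hroot v)

/-- The Cesàro map `Λ_T`. -/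
def cesaro (T : TreeData V) (f : V → ℂ) : V → ℂ := fun v =>
  ((T.dep v : ℂ) + 1)⁻¹ * ∑ j ∈ Finset.range (T.dep v + 1), f (T.par^[j] v)

/-- The `n`-th level `Chi^⟨n⟩(root)`: vertices of depth `n`. -/
def level (T : TreeData V) (n : ℕ) : Set V := {v : V | T.dep v = n}

/-- The set of children of a vertex. -/
def chi (T : TreeData V) (u : V) : Set V := {v : V | v ≠ T.root ∧ T.par v = u}

end TreeData

/-- The Hilbert space `ℓ²(V)` of square-summable complex functions on `V`. -/
abbrev L2 (V : Type) : Type := lp (fun _ : V => ℂ) 2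

open Filter Finset
open scoped Topology InnerProductSpace

section LpSpace

variable {ι : Type*} {E : ι → Type*} [∀ i, NormedAddCommGroup (E i)]

lemma tendsto_norm_lp_apply_cofinite_zero {p : ℝ≥0∞} (hp : 0 < p.toReal) (f : lp E p) :
    Tendsto (fun i ↦ ‖f i‖) cofinite (𝓝 0) := by
  have hpow : Tendsto (fun i ↦ ‖f i‖ ^ p.toReal) cofinite (𝓝 0) :=
    ((lp.memℓp f).summable hp).tendsto_cofinite_zero
  simpa [Real.rpow_rpow_inv (norm_nonneg _) hp.ne', Real.zero_rpow (inv_ne_zero hp.ne')] using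
    hpow.rpow_const (p := p.toReal⁻¹) (.inr (inv_nonneg.2 hp.le))

lemma inner_sum_lp_single_left {𝕜 : Type*} [RCLike 𝕜] [∀ i, InnerProductSpace 𝕜 (E i)]
    [DecidableEq ι] (s : Finset ι) (a : ∀ i, E i) (f : lp E 2) :
    ⟪∑ i ∈ s, lp.single 2 i (a i), f⟫_𝕜 = ∑ i ∈ s, ⟪a i, f i⟫_𝕜 := by
  simp only [sum_inner, lp.inner_single_left]

lemma sum_lp_single_apply_of_mem [DecidableEq ι] (p : ℝ≥0∞) {s : Finset ι} (a : ∀ i, E i) {i : ι}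
    (hi : i ∈ s) : (∑ j ∈ s, lp.single p j (a j) : lp E p) i = a i := by
  rw [lp.coeFn_sum, Finset.sum_apply]
  simp [lp.single_apply, hi]

end LpSpace

/-- The arithmetic mean of `g 0, …, g n`, i.e. the `n`-th entry of the classical Cesàro matrix
applied to `g`. Its terms are indexed by depth, so `T.cesaro` is computed by it on functions of
the depth. -/
def cesaroMean (g : ℕ → ℝ) (n : ℕ) : ℝ := ((n : ℝ) + 1)⁻¹ * ∑ k ∈ range (n + 1), g k

lemma two_mul_sqrt_sub_two_le_sum_inv_sqrt (n : ℕ) :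
    2 * √((n : ℝ) + 1) - 2 ≤ ∑ k ∈ range n, (√((k : ℝ) + 1))⁻¹ := by
  induction n with
  | zero => simp
  | succ n ih =>
    have hs : √((n : ℝ) + 1) ^ 2 = n + 1 := Real.sq_sqrt (by positivity)
    have ht : √((n : ℝ) + 1 + 1) ^ 2 = n + 1 + 1 := Real.sq_sqrt (by positivity)
    have hincr : 2 * √((n : ℝ) + 1 + 1) - 2 * √((n : ℝ) + 1) ≤ (√((n : ℝ) + 1))⁻¹ := by
      rw [← one_div, le_div_iff₀ (by positivity)]
      linarith [sq_nonneg (√((n : ℝ) + 1 + 1) - √((n : ℝ) + 1))]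
    rw [sum_range_succ]
    push_cast
    linarith

lemma two_mul_inv_sub_le_inv_sqrt_mul_cesaroMean (n : ℕ) :
    2 * ((n : ℝ) + 1)⁻¹ - 2 * (√((n : ℝ) + 1) ^ 3)⁻¹ ≤
      (√((n : ℝ) + 1))⁻¹ * cesaroMean (fun k ↦ (√((k : ℝ) + 1))⁻¹) n := by
  have hsum : 2 * √((n : ℝ) + 1) - 2 ≤ ∑ k ∈ range (n + 1), (√((k : ℝ) + 1))⁻¹ :=
    (two_mul_sqrt_sub_two_le_sum_inv_sqrt n).trans <|
      sum_le_sum_of_subset_of_nonneg (range_mono n.le_succ) fun _ _ _ ↦ by positivity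
  have hs : √((n : ℝ) + 1) ^ 2 = n + 1 := Real.sq_sqrt (by positivity)
  calc 2 * ((n : ℝ) + 1)⁻¹ - 2 * (√((n : ℝ) + 1) ^ 3)⁻¹
      = (√((n : ℝ) + 1))⁻¹ * (((n : ℝ) + 1)⁻¹ * (2 * √((n : ℝ) + 1) - 2)) := by
        rw [← hs, Real.sqrt_sq (by positivity)]
        field_simp
    _ ≤ (√((n : ℝ) + 1))⁻¹ * cesaroMean (fun k ↦ (√((k : ℝ) + 1))⁻¹) n := by
        unfold cesaroMean
        gcongr

lemma summable_inv_sqrt_pow_three : Summable fun n : ℕ ↦ (√((n : ℝ) + 1) ^ 3)⁻¹ := by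
  refine ((Real.summable_one_div_nat_add_rpow 1 (3 / 2)).2 (by norm_num)).congr fun n ↦ ?_
  have hn : (0 : ℝ) ≤ n + 1 := by positivity
  rw [abs_of_nonneg hn, one_div, Real.sqrt_eq_rpow, ← Real.rpow_mul_natCast hn]
  norm_num

/-- The constant `2` in Hardy's inequality is optimal, even for the quadratic form. -/
lemma two_le_of_frequently_sum_mul_cesaroMean_le {c : ℝ}
    (h : ∃ᶠ N in atTop, ∀ g : ℕ → ℝ,
      ∑ n ∈ range (N + 1), g n * cesaroMean g n ≤ c * ∑ n ∈ range (N + 1), g n ^ 2) :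
    2 ≤ c := by
  by_contra! hc
  set K := ∑' n : ℕ, (√((n : ℝ) + 1) ^ 3)⁻¹
  have hdiv : Tendsto (fun N ↦ (2 - c) * ∑ n ∈ range (N + 1), 1 / ((n : ℝ) + 1)) atTop atTop :=
    (Real.tendsto_sum_range_one_div_nat_succ_atTop.comp (tendsto_add_atTop_nat 1)).const_mul_atTop
      (sub_pos.2 hc)
  obtain ⟨N, hN, hlarge⟩ := (h.and_eventually (hdiv.eventually_gt_atTop (2 * K))).exists
  simp only [one_div] at hlarge
  have hupper : ∑ n ∈ range (N + 1), (√((n : ℝ) + 1))⁻¹ *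
      cesaroMean (fun k ↦ (√((k : ℝ) + 1))⁻¹) n ≤ c * ∑ n ∈ range (N + 1), ((n : ℝ) + 1)⁻¹ := by
    have hsq (n : ℕ) : (√((n : ℝ) + 1))⁻¹ ^ 2 = ((n : ℝ) + 1)⁻¹ := by
      rw [inv_pow, Real.sq_sqrt (by positivity)]
    simpa only [hsq] using hN fun k ↦ (√((k : ℝ) + 1))⁻¹
  have hlower := sum_le_sum fun n (_ : n ∈ range (N + 1)) ↦
    two_mul_inv_sub_le_inv_sqrt_mul_cesaroMean n
  rw [sum_sub_distrib, ← mul_sum, ← mul_sum] at hlower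
  have herror : ∑ n ∈ range (N + 1), (√((n : ℝ) + 1) ^ 3)⁻¹ ≤ K :=
    summable_inv_sqrt_pow_three.sum_le_tsum _ fun _ _ ↦ by positivity
  linarith

namespace TreeData

variable {V : Type} (T : TreeData V)

lemma iterate_par_eq_root_iff {v : V} {n : ℕ} : T.par^[n] v = T.root ↔ T.dep v ≤ n := by
  classical
  refine ⟨fun h ↦ Nat.find_min' (T.hroot v) h, fun h ↦ ?_⟩
  have hdep : T.par^[T.dep v] v = T.root := Nat.find_spec (T.hroot v)
  rw [← Nat.sub_add_cancel h, Function.iterate_add_apply, hdep,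
    Function.iterate_fixed T.par_root]

lemma dep_iterate_par (v : V) (j : ℕ) : T.dep (T.par^[j] v) = T.dep v - j :=
  eq_of_forall_ge_iff fun n ↦ by
    rw [← T.iterate_par_eq_root_iff, ← Function.iterate_add_apply, T.iterate_par_eq_root_iff,
      tsub_le_iff_right]

open scoped Classical in
lemma cesaro_single_root (v : V) :
    T.cesaro (Pi.single T.root 1) v = ((T.dep v : ℂ) + 1)⁻¹ := by
  have hzero : ∀ j ∈ range (T.dep v), (Pi.single T.root 1 : V → ℂ) (T.par^[j] v) = 0 :=
    fun j hj ↦ Pi.single_eq_of_ne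
      (fun h ↦ (mem_range.1 hj).not_ge (T.iterate_par_eq_root_iff.1 h)) _
  rw [cesaro, sum_range_succ, sum_eq_zero hzero, T.iterate_par_eq_root_iff.2 le_rfl,
    Pi.single_eq_same, zero_add, mul_one]

open scoped Classical in
/-- The vertices on the path from `v` to the root, both ends included; test functions are
supported on such paths. -/
def ancestors (v : V) : Finset V := (range (T.dep v + 1)).image fun j ↦ T.par^[j] v

lemma mem_ancestors {u v : V} : u ∈ T.ancestors v ↔ ∃ j, T.par^[j] v = u := by
  classical
  refine ⟨fun hu ↦ ?_, ?_⟩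
  · obtain ⟨j, -, hj⟩ := mem_image.1 hu
    exact ⟨j, hj⟩
  · rintro ⟨j, rfl⟩
    rcases le_total j (T.dep v) with hj | hj
    · exact mem_image_of_mem _ (mem_range_succ_iff.2 hj)
    · rw [T.iterate_par_eq_root_iff.2 hj, ← T.iterate_par_eq_root_iff.2 le_rfl]
      exact mem_image_of_mem _ (self_mem_range_succ _)

lemma ancestors_subset {u v : V} (hu : u ∈ T.ancestors v) : T.ancestors u ⊆ T.ancestors v := by
  intro w hw
  obtain ⟨i, rfl⟩ := T.mem_ancestors.1 hu
  obtain ⟨j, rfl⟩ := T.mem_ancestors.1 hw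
  exact T.mem_ancestors.2 ⟨j + i, Function.iterate_add_apply _ _ _ _⟩

lemma sum_ancestors_comp_dep {M : Type*} [AddCommMonoid M] (v : V) (F : ℕ → M) :
    ∑ u ∈ T.ancestors v, F (T.dep u) = ∑ n ∈ range (T.dep v + 1), F n := by
  classical
  have hinj : Set.InjOn (fun j ↦ T.par^[j] v) (range (T.dep v + 1)) := fun i hi j hj hij ↦ by
    have hdep := congrArg T.dep hij
    simp only [T.dep_iterate_par, coe_range, Set.mem_Iio] at hdep hi hj
    lia
  rw [ancestors, sum_image hinj, ← sum_range_reflect F]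
  simp only [T.dep_iterate_par, Nat.add_sub_cancel]

lemma cesaro_eq_cesaroMean {f : V → ℂ} {g : ℕ → ℝ} {v : V}
    (hfg : ∀ u ∈ T.ancestors v, f u = g (T.dep u)) :
    T.cesaro f v = cesaroMean g (T.dep v) := by
  have hsum : ∑ j ∈ range (T.dep v + 1), f (T.par^[j] v) =
      ∑ k ∈ range (T.dep v + 1), (g k : ℂ) := by
    rw [← sum_range_reflect fun k ↦ (g k : ℂ)]
    refine sum_congr rfl fun j _ ↦ ?_
    rw [hfg _ (T.mem_ancestors.2 ⟨j, rfl⟩), T.dep_iterate_par, Nat.add_sub_cancel]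
  rw [cesaro, hsum, cesaroMean]
  push_cast
  rfl

lemma tendsto_dep_cofinite_atTop (C : L2 V →L[ℂ] L2 V)
    (hC : ∀ (f : L2 V) (v : V), C f v = T.cesaro ⇑f v) :
    Tendsto T.dep cofinite atTop := by
  classical
  have hnorm (v : V) : ‖C (lp.single 2 T.root 1) v‖ = ((T.dep v : ℝ) + 1)⁻¹ := by
    rw [hC, lp.coeFn_single, T.cesaro_single_root, norm_inv, ← Nat.cast_succ,
      RCLike.norm_natCast, Nat.cast_succ]
  have hinv : Tendsto (fun v ↦ ((T.dep v : ℝ) + 1)⁻¹) cofinite (𝓝 0) := by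
    simpa only [hnorm] using
      tendsto_norm_lp_apply_cofinite_zero (by norm_num) (C (lp.single 2 T.root 1))
  refine tendsto_atTop.2 fun n ↦
    (hinv.eventually_lt_const (u := ((n : ℝ) + 1)⁻¹) (by positivity)).mono fun v hv ↦ ?_
  rw [inv_lt_inv₀ (by positivity) (by positivity), add_lt_add_iff_right, Nat.cast_lt] at hv
  exact hv.le

lemma sum_mul_cesaroMean_le (C : L2 V →L[ℂ] L2 V)
    (hC : ∀ (f : L2 V) (v : V), C f v = T.cesaro ⇑f v) (v : V) (g : ℕ → ℝ) :
    ∑ n ∈ range (T.dep v + 1), g n * cesaroMean g n ≤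
      ‖C‖ * ∑ n ∈ range (T.dep v + 1), g n ^ 2 := by
  classical
  set f : L2 V := ∑ u ∈ T.ancestors v, lp.single 2 u (g (T.dep u) : ℂ)
  have hf : ∀ u ∈ T.ancestors v, f u = g (T.dep u) := fun u hu ↦
    sum_lp_single_apply_of_mem 2 (fun u ↦ (g (T.dep u) : ℂ)) hu
  have hCf : ∀ u ∈ T.ancestors v, C f u = cesaroMean g (T.dep u) := fun u hu ↦ by
    rw [hC, T.cesaro_eq_cesaroMean fun w hw ↦ hf w (T.ancestors_subset hu hw)]
  have hform : ⟪f, C f⟫_ℂ = (∑ n ∈ range (T.dep v + 1), g n * cesaroMean g n : ℝ) := by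
    rw [← T.sum_ancestors_comp_dep v fun n ↦ g n * cesaroMean g n, inner_sum_lp_single_left,
      Complex.ofReal_sum]
    refine sum_congr rfl fun u hu ↦ ?_
    simp [hCf u hu, mul_comm]
  have hnorm : ‖f‖ ^ 2 = ∑ n ∈ range (T.dep v + 1), g n ^ 2 := by
    rw [← T.sum_ancestors_comp_dep v fun n ↦ g n ^ 2]
    simpa using lp.norm_sum_single (p := 2) (by norm_num) (fun u ↦ (g (T.dep u) : ℂ))
      (T.ancestors v)
  calc ∑ n ∈ range (T.dep v + 1), g n * cesaroMean g n
      = RCLike.re ⟪f, C f⟫_ℂ := by rw [hform]; rfl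
    _ ≤ ‖f‖ * ‖C f‖ := re_inner_le_norm f (C f)
    _ ≤ ‖f‖ * (‖C‖ * ‖f‖) := by gcongr; exact C.le_opNorm f
    _ = ‖C‖ * ∑ n ∈ range (T.dep v + 1), g n ^ 2 := by rw [← hnorm]; ring

end TreeData

theorem two_le_norm_cesaro_general {V : Type} [Infinite V] (T : TreeData V)
    (C : L2 V →L[ℂ] L2 V) (hC : ∀ (f : L2 V) (v : V), C f v = T.cesaro ⇑f v) :
    2 ≤ ‖C‖ :=
  two_le_of_frequently_sum_mul_cesaroMean_le <|
    (T.tendsto_dep_cofinite_atTop C hC).frequently <|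
      .of_forall fun v ↦ T.sum_mul_cesaroMean_le C hC v

/-- For a narrow rooted directed tree `T`, the bounded Cesàro operator `C_T`
on `ℓ²(V)` has norm at least `2`. -/
theorem two_le_norm_cesaro {V : Type} [Countable V] [Infinite V]
    (T : TreeData V) (m : ℕ) (hm : ∀ n : ℕ, (T.level n).encard ≤ m)
    (C : L2 V →L[ℂ] L2 V) (hC : ∀ (f : L2 V) (v : V), C f v = T.cesaro ⇑f v) :
    2 ≤ ‖C‖ :=
  two_le_norm_cesaro_general T C hC
end
end

section
/- Let T = (V, root, par) be a leafless, locally finite rooted directed tree of finite branching index k_T, let d = card(Chi^⟨k_T⟩(root)) (a finite positive integer) and let N = card{v ∈ V : dep(v) < k_T} (finite). Then Λ_T defines a bounded operator C_T on ℓ²(V), and there exist a unitary operator U from ℓ²(V) onto ℂ^N ⊕ (ℓ²(ℕ))^{⊕d} and a compact operator K on ℓ²(V) such that C_T = U* (0 ⊕ (C₀ ⊕ ⋯ ⊕ C₀)) U + K, where C₀ ⊕ ⋯ ⊕ C₀ is the d-fold direct sum of the classical Cesàro operator and 0 is the zero operator on ℂ^N. In particular, C_T is essentially equivalent to the d-fold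 direct sum of C₀. -/
noncomputable section

open scoped ENNReal

/-- A branching vertex: a vertex with at least two children. -/
def TreeData.branching {V : Type} (T : TreeData V) (v : V) : Prop := 2 ≤ (T.chi v).encard

/-- `k` is the branching index of `T`: all branching vertices have depth `< k`, and `k` is
least such (`k = 1 + max` of the branching depths, or `0` if there is no branching vertex). -/
def TreeData.isBranchingIndex {V : Type} (T : TreeData V) (k : ℕ) : Prop :=
  (∀ v : V, T.branching v → T.dep v + 1 ≤ k) ∧
  (k = 0 ∨ ∃ v : V, T.branching v ∧ T.dep v + 1 = k)

/-!
Above the branching depth `k` every vertex has exactly one child, so `V` consists of the finitely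
many vertices of depth `< k` and of `d` rays issuing from the vertices of depth `k`. At the `n`-th
vertex of a ray the Cesàro mean runs over `k + n + 1` ancestors, of which `n + 1` lie on the ray and
`k` lie below depth `k`. The latter contribute an operator of finite rank. The former contribute
`(n + 1) / (k + n + 1) = 1 - k / (k + n + 1)` times the classical Cesàro mean along the ray, and
multiplication by `k / (k + n + 1) → 0` is compact.
-/

open Filter Topology

namespace TreeData

section Depth

variable {V : Type} (T : TreeData V)

lemma par_iterate_dep (v : V) : T.par^[T.dep v] v = T.root := by
  classical exact Nat.find_spec (T.hroot v)

lemma dep_le_of_par_iterate_eq_root {v : V} {n : ℕ} (h : T.par^[n] v = T.root) : T.dep v ≤ n := by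
  classical exact Nat.find_min' (T.hroot v) h

lemma dep_root : T.dep T.root = 0 :=
  Nat.le_zero.1 (T.dep_le_of_par_iterate_eq_root rfl)

lemma dep_eq_dep_par_add_one {v : V} (hv : v ≠ T.root) : T.dep v = T.dep (T.par v) + 1 := by
  apply le_antisymm
  · exact T.dep_le_of_par_iterate_eq_root (T.par_iterate_dep (T.par v))
  · have hroot := T.par_iterate_dep v
    cases hn : T.dep v with
    | zero => rw [hn] at hroot; exact absurd hroot hv
    | succ n =>
      rw [hn, Function.iterate_succ_apply] at hroot
      exact Nat.succ_le_succ (T.dep_le_of_par_iterate_eq_root hroot)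

lemma dep_par (v : V) : T.dep (T.par v) = T.dep v - 1 := by
  by_cases hv : v = T.root
  · rw [hv, T.par_root, T.dep_root]
  · rw [T.dep_eq_dep_par_add_one hv, Nat.add_sub_cancel]

lemma dep_par_iterate (v : V) (n : ℕ) : T.dep (T.par^[n] v) = T.dep v - n := by
  induction n with
  | zero => rfl
  | succ n ih => rw [Function.iterate_succ_apply', T.dep_par, ih, Nat.sub_sub]

end Depth

section RayDecomposition

variable {V : Type}

/-- A splitting of the vertices into those of depth `< k`, indexed by `ι`, and rays issuing from
depth `k`, indexed by `κ`: the vertex `inr (j, n)` is the `n`-th one on the `j`-th ray. -/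
structure RayDecomposition (T : TreeData V) (k : ℕ) (ι κ : Type*) where
  toEquiv : ι ⊕ κ × ℕ ≃ V
  dep_inl (i : ι) : T.dep (toEquiv (.inl i)) < k
  dep_inr (j : κ) (n : ℕ) : T.dep (toEquiv (.inr (j, n))) = k + n
  par_inr (j : κ) (n : ℕ) : T.par (toEquiv (.inr (j, n + 1))) = toEquiv (.inr (j, n))

variable {T : TreeData V} {k : ℕ}

lemma chi_par_subsingleton (hbranch : ∀ v, T.branching v → T.dep v < k) {v : V}
    (hv : k < T.dep v) : (T.chi (T.par v)).Subsingleton := by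
  have hnb : ¬ T.branching (T.par v) := fun hb => by
    have := hbranch _ hb
    rw [T.dep_par] at this
    omega
  have hcard : (T.chi (T.par v)).encard ≤ 1 :=
    Order.le_of_lt_add_one (by rwa [one_add_one_eq_two, ← not_le])
  exact fun a ha b hb => Set.encard_le_one_iff.1 hcard a b ha hb

section ChildSelector

variable {s : V → V} (hs : ∀ u, s u ∈ T.chi u)

include hs in
lemma dep_iterate_of_mem_chi (n : ℕ) (u : V) : T.dep (s^[n] u) = T.dep u + n := by
  induction n with
  | zero => rfl
  | succ n ih =>
    rw [Function.iterate_succ_apply', T.dep_eq_dep_par_add_one (hs _).1, (hs _).2, ih, add_assoc]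

include hs in
lemma iterate_par_iterate_of_mem_chi (hbranch : ∀ v, T.branching v → T.dep v < k) (n : ℕ)
    {v : V} (hv : k + n ≤ T.dep v) : s^[n] (T.par^[n] v) = v := by
  induction n generalizing v with
  | zero => rfl
  | succ n ih =>
    have hroot : v ≠ T.root := by
      rintro rfl
      rw [T.dep_root] at hv
      omega
    rw [Function.iterate_succ_apply', Function.iterate_succ_apply,
      ih (by rw [T.dep_par]; omega)]
    exact chi_par_subsingleton hbranch (by omega) (hs _) ⟨hroot, rfl⟩

/-- Following the chosen child `s u` of each vertex `u` enumerates the vertices of depth at least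
`k` along rays starting at level `k`. -/
def rayEquiv (hbranch : ∀ v, T.branching v → T.dep v < k) :
    T.level k × ℕ ≃ {v // ¬ T.dep v < k} where
  toFun p := ⟨s^[p.2] p.1, by
    rw [dep_iterate_of_mem_chi hs, show T.dep p.1 = k from p.1.2]; omega⟩
  invFun v := (⟨T.par^[T.dep v - k] v, by
    change T.dep _ = k
    have := v.2
    rw [T.dep_par_iterate]; omega⟩, T.dep v - k)
  left_inv := by
    rintro ⟨⟨u, hu⟩, n⟩
    have hdep : T.dep (s^[n] u) - k = n := by
      rw [dep_iterate_of_mem_chi hs, show T.dep u = k from hu, Nat.add_sub_cancel_left]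
    have hpar : T.par^[n] (s^[n] u) = u := Function.LeftInverse.iterate (fun u => (hs u).2) n u
    simp only [hdep, hpar]
  right_inv v :=
    Subtype.ext (iterate_par_iterate_of_mem_chi hs hbranch _ (by
      change k + (T.dep v - k) ≤ T.dep v
      have := v.2
      omega))

end ChildSelector

theorem nonempty_rayDecomposition {ι κ : Type*} (hleafless : ∀ u, (T.chi u).Nonempty)
    (hbranch : ∀ v, T.branching v → T.dep v < k) (a : ι ≃ {v // T.dep v < k})
    (b : κ ≃ T.level k) : Nonempty (T.RayDecomposition k ι κ) := by
  classical
  choose s hs using hleafless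
  refine ⟨⟨(a.sumCongr ((b.prodCongr (.refl ℕ)).trans (rayEquiv hs hbranch))).trans
    (Equiv.sumCompl _), fun i => (a i).2, fun j n => ?_, fun j n => ?_⟩⟩
  · exact (dep_iterate_of_mem_chi hs n (b j)).trans (congrArg (· + n) (b j).2)
  · change T.par (s^[n + 1] (b j)) = s^[n] (b j)
    rw [Function.iterate_succ_apply', (hs _).2]

lemma RayDecomposition.par_iterate_inr {ι κ : Type*} (Φ : T.RayDecomposition k ι κ) (j : κ)
    (n m : ℕ) : T.par^[m] (Φ.toEquiv (.inr (j, n + m))) = Φ.toEquiv (.inr (j, n)) := by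
  induction m with
  | zero => rfl
  | succ m ih => rw [Function.iterate_succ_apply, ← add_assoc, Φ.par_inr, ih]

end RayDecomposition

end TreeData

section SquareSummable

lemma memℓp_two_iff_summable_norm_sq {α : Type*} {E : α → Type*} [∀ a, NormedAddCommGroup (E a)]
    {f : ∀ a, E a} : Memℓp f 2 ↔ Summable fun a => ‖f a‖ ^ 2 := by
  simpa using memℓp_gen_iff (p := 2) (f := f) (by norm_num)

lemma tendsto_norm_cofinite_zero_of_memℓp_two {α : Type*} {E : α → Type*}
    [∀ a, NormedAddCommGroup (E a)] {f : ∀ a, E a} (hf : Memℓp f 2) :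
    Tendsto (fun a => ‖f a‖) cofinite (𝓝 0) := by
  simpa using (memℓp_two_iff_summable_norm_sq.1 hf).tendsto_cofinite_zero.sqrt

lemma hasSum_norm_sq_lp_two {α : Type*} {E : α → Type*} [∀ a, NormedAddCommGroup (E a)]
    (f : lp E 2) : HasSum (fun a => ‖f a‖ ^ 2) (‖f‖ ^ 2) := by
  simpa using lp.hasSum_norm (p := 2) (by norm_num) f

lemma hasSum_sum_prod_of_nonneg {ι κ β : Type*} [Fintype ι] [Fintype κ] {g : ι ⊕ κ × β → ℝ}
    (hg : ∀ x, 0 ≤ g x) {c : κ → ℝ} (hc : ∀ j, HasSum (fun n => g (.inr (j, n))) (c j)) :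
    HasSum g (∑ i, g (.inl i) + ∑ j, c j) := by
  have hsummable : Summable fun p : κ × β => g (.inr p) :=
    (summable_prod_of_nonneg fun _ => hg _).2 ⟨fun j => (hc j).summable, Summable.of_finite⟩
  have hfiber := hsummable.hasSum.prod_fiberwise hc
  exact (hasSum_fintype fun i => g (.inl i)).sum
    (hfiber.unique (hasSum_fintype c) ▸ hsummable.hasSum)

end SquareSummable

namespace L2

section SumProdIsometry

variable {V β ι κ : Type} (e : ι ⊕ κ × β ≃ V)

/-- The restriction of a square-summable function on `V` to the `j`-th copy of `β`, where `V` is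
relabelled as `ι ⊕ κ × β`. -/
def restrictInr (f : L2 V) (j : κ) : L2 β :=
  ⟨fun n => f (e (.inr (j, n))), memℓp_two_iff_summable_norm_sq.2 <|
    (hasSum_norm_sq_lp_two f).summable.comp_injective
      (e.injective.comp (Sum.inr_injective.comp (Prod.mk_right_injective j)))⟩

variable [Fintype ι] [Fintype κ]

/-- The square-summable function on `V` glued from a function on `ι` and one on each copy of `β`,
where `V` is relabelled as `ι ⊕ κ × β`. -/
def glue (x : EuclideanSpace ℂ ι) (y : κ → L2 β) : L2 V :=
  ⟨fun v => Sum.elim x (fun p => y p.1 p.2) (e.symm v),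
    memℓp_two_iff_summable_norm_sq.2 <| e.symm.summable_iff.2 (hasSum_sum_prod_of_nonneg
      (g := fun z => ‖Sum.elim x (fun p => y p.1 p.2) z‖ ^ 2)
      (fun _ => by positivity) fun j => hasSum_norm_sq_lp_two (y j)).summable⟩

lemma glue_inl (x : EuclideanSpace ℂ ι) (y : κ → L2 β) (i : ι) :
    glue e x y (e (.inl i)) = x i := by
  change Sum.elim x (fun p => y p.1 p.2) (e.symm (e (.inl i))) = x i
  rw [e.symm_apply_apply, Sum.elim_inl]

lemma glue_inr (x : EuclideanSpace ℂ ι) (y : κ → L2 β) (j : κ) (n : β) :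
    glue e x y (e (.inr (j, n))) = y j n := by
  change Sum.elim x (fun p => y p.1 p.2) (e.symm (e (.inr (j, n)))) = y j n
  rw [e.symm_apply_apply, Sum.elim_inr]

lemma norm_sq_eq_sum_norm_sq_restrictInr (f : L2 V) :
    ‖f‖ ^ 2 = ∑ i, ‖f (e (.inl i))‖ ^ 2 + ∑ j, ‖restrictInr e f j‖ ^ 2 :=
  (e.hasSum_iff.2 (hasSum_norm_sq_lp_two f)).unique <|
    hasSum_sum_prod_of_nonneg (g := fun z => ‖f (e z)‖ ^ 2) (fun _ => by positivity)
      fun j => hasSum_norm_sq_lp_two (restrictInr e f j)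

/-- Relabelling `V` as `ι ⊕ κ × β` with `ι` and `κ` finite splits `ℓ²(V)` isometrically into `ℂ^ι`
and one copy of `ℓ²(β)` for each element of `κ`. -/
def sumProdIsometry :
    L2 V ≃ₗᵢ[ℂ] WithLp 2 (EuclideanSpace ℂ ι × PiLp 2 fun _ : κ => L2 β) where
  toFun f := .toLp 2 (.toLp 2 fun i => f (e (.inl i)), .toLp 2 (restrictInr e f))
  invFun X := glue e X.fst X.snd
  map_add' _ _ := rfl
  map_smul' _ _ := rfl
  left_inv f := by
    ext v
    obtain ⟨i | ⟨j, n⟩, rfl⟩ := e.surjective v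
    · exact glue_inl ..
    · exact glue_inr ..
  right_inv X := by
    refine WithLp.ofLp_injective _ (Prod.ext ?_ ?_)
    · ext i
      exact glue_inl e X.fst X.snd i
    · ext j n
      exact glue_inr e X.fst X.snd j n
  norm_map' f := by
    rw [← sq_eq_sq₀ (norm_nonneg _) (norm_nonneg _), norm_sq_eq_sum_norm_sq_restrictInr e f]
    exact (WithLp.prod_norm_sq_eq_of_L2 _).trans
      (congrArg₂ (· + ·) (EuclideanSpace.norm_sq_eq _) (PiLp.norm_sq_eq_of_L2 _ _))

end SumProdIsometry

end L2

/-- The block operator `0 ⊕ (R ⊕ ⋯ ⊕ R)` on the Hilbert sum of `E` and copies of `F`. -/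
def zeroDirectSum (E F κ : Type*) [Fintype κ] [NormedAddCommGroup E] [NormedSpace ℂ E]
    [NormedAddCommGroup F] [NormedSpace ℂ F] (R : F →L[ℂ] F) :
    WithLp 2 (E × PiLp 2 fun _ : κ => F) →L[ℂ] WithLp 2 (E × PiLp 2 fun _ : κ => F) :=
  let piEquiv := PiLp.continuousLinearEquiv 2 ℂ fun _ : κ => F
  let prodEquiv := WithLp.prodContinuousLinearEquiv 2 ℂ E (PiLp 2 fun _ : κ => F)
  prodEquiv.symm.toContinuousLinearMap ∘L
    .prodMap 0 (piEquiv.symm.toContinuousLinearMap ∘L .piMap (fun _ => R) ∘L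
      piEquiv.toContinuousLinearMap) ∘L
    prodEquiv.toContinuousLinearMap

section DiagonalOperators

variable {α 𝕜 : Type*} {E F : α → Type*} [NontriviallyNormedField 𝕜]
  [∀ a, NormedAddCommGroup (E a)] [∀ a, NormedSpace 𝕜 (E a)]
  [∀ a, NormedAddCommGroup (F a)] [∀ a, NormedSpace 𝕜 (F a)]

lemma isCompactOperator_sum {ι M M' : Type*} [SeminormedAddCommGroup M] [NormedSpace 𝕜 M]
    [SeminormedAddCommGroup M'] [NormedSpace 𝕜 M'] (s : Finset ι) {S : ι → M →L[𝕜] M'}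
    (hS : ∀ i ∈ s, IsCompactOperator (S i)) : IsCompactOperator (∑ i ∈ s, S i : M →L[𝕜] M') :=
  Submodule.sum_mem (compactOperator (RingHom.id 𝕜) M M') hS

lemma sum_single_comp_eval_apply [DecidableEq α] (p : ℝ≥0∞) [Fact (1 ≤ p)]
    (S : ∀ a, E a →L[𝕜] F a) (s : Finset α) (f : lp E p) (a : α) :
    (∑ i ∈ s, lp.singleContinuousLinearMap 𝕜 F p i ∘L S i ∘L lp.evalCLM 𝕜 E p i) f a =
      if a ∈ s then S a (f a) else 0 := by
  simp only [sum_apply, lp.coeFn_sum, Finset.sum_apply, ContinuousLinearMap.comp_apply]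
  change ∑ i ∈ s, (lp.single p i (S i (f i)) : ∀ a, F a) a = _
  simp only [lp.single_apply, Finset.sum_pi_single]

theorem isCompactOperator_mapCLM [∀ a, CompleteSpace (F a)] {p : ℝ≥0∞} [Fact (1 ≤ p)]
    {S : ∀ a, E a →L[𝕜] F a} {C : ℝ} (hC : 0 ≤ C) (hSC : ∀ a, ‖S a‖ ≤ C)
    (hcompact : ∀ a, IsCompactOperator (S a))
    (hzero : Tendsto (fun a => ‖S a‖) cofinite (𝓝 0)) :
    IsCompactOperator (lp.mapCLM p S hC hSC) := by
  classical
  let S' (s : Finset α) : lp E p →L[𝕜] lp F p :=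
    ∑ i ∈ s, lp.singleContinuousLinearMap 𝕜 F p i ∘L S i ∘L lp.evalCLM 𝕜 E p i
  refine isCompactOperator_of_tendsto (l := atTop) (F := S') ?_ <| .of_forall fun s =>
    isCompactOperator_sum s fun i _ => ((hcompact i).comp_clm (lp.evalCLM 𝕜 E p i)).clm_comp
      (lp.singleContinuousLinearMap 𝕜 F p i)
  refine Metric.tendsto_atTop.2 fun ε hε => ?_
  have hfinite : {a | ¬ ‖S a‖ < ε / 2}.Finite :=
    eventually_cofinite.1 (hzero.eventually_lt_const (half_pos hε))
  refine ⟨hfinite.toFinset, fun s hs => ?_⟩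
  have htail (a : α) : ‖if a ∈ s then 0 else S a‖ ≤ ε / 2 := by
    split_ifs with ha
    · simpa using (half_pos hε).le
    · by_contra hlarge
      exact ha (hs (by simpa using (not_le.1 hlarge).le))
  have hdiff : lp.mapCLM p S hC hSC - S' s = lp.mapCLM p _ (half_pos hε).le htail := by
    ext f a
    change S a (f a) - S' s f a = (if a ∈ s then 0 else S a) (f a)
    rw [sum_single_comp_eval_apply]
    split_ifs <;> simp
  calc dist (S' s) (lp.mapCLM p S hC hSC) = ‖lp.mapCLM p _ (half_pos hε).le htail‖ := by
        rw [dist_eq_norm', hdiff]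
    _ ≤ ε / 2 := lp.norm_mapCLM_le p _ _ htail
    _ < ε := half_lt_self hε

end DiagonalOperators

namespace TreeData

variable {V : Type}

section Weight

variable (T : TreeData V)

/-- The Cesàro weight `1 / (dep v + 1)` at `v`. -/
def weight (v : V) : ℂ := ((T.dep v : ℂ) + 1)⁻¹

lemma norm_weight (v : V) : ‖T.weight v‖ = ((T.dep v : ℝ) + 1)⁻¹ := by
  rw [weight, norm_inv, ← Nat.cast_succ, Complex.norm_natCast, Nat.cast_succ]

lemma norm_weight_le_one (v : V) : ‖T.weight v‖ ≤ 1 := by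
  rw [norm_weight]
  exact inv_le_one_of_one_le₀ (le_add_of_nonneg_left (Nat.cast_nonneg _))

/-- Multiplication by the Cesàro weight, as an operator on `ℓ²(V)`. -/
def weightMul : L2 V →L[ℂ] L2 V :=
  lp.mapCLM 2 (fun v => ContinuousLinearMap.mul ℂ ℂ (T.weight v)) zero_le_one fun v => by
    simpa only [ContinuousLinearMap.opNorm_mul_apply] using T.norm_weight_le_one v

variable {T}

lemma isCompactOperator_weightMul (hT : Memℓp T.weight 2) : IsCompactOperator T.weightMul :=
  isCompactOperator_mapCLM _ _ (fun v => isCompactOperator_of_locallyCompactSpace_dom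
      (ContinuousLinearMap.mul ℂ ℂ (T.weight v))) <| by
    simpa only [ContinuousLinearMap.opNorm_mul_apply] using
      tendsto_norm_cofinite_zero_of_memℓp_two hT

lemma RayDecomposition.memℓp_weight {k : ℕ} {ι κ : Type*} [Finite ι] [Finite κ]
    (Φ : T.RayDecomposition k ι κ) : Memℓp T.weight 2 := by
  have := Fintype.ofFinite ι
  have := Fintype.ofFinite κ
  have hray (j : κ) : Summable fun n => ‖T.weight (Φ.toEquiv (.inr (j, n)))‖ ^ 2 := by
    refine ((summable_nat_add_iff (k + 1)).2
      (Real.summable_one_div_nat_pow.2 one_lt_two)).congr fun n => ?_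
    rw [norm_weight, Φ.dep_inr, inv_pow, one_div]
    push_cast
    ring
  exact memℓp_two_iff_summable_norm_sq.2 <| Φ.toEquiv.summable_iff.1
    (hasSum_sum_prod_of_nonneg (g := fun x => ‖T.weight (Φ.toEquiv x)‖ ^ 2)
      (fun _ => by positivity) fun j => (hray j).hasSum).summable

end Weight

section FiniteSupport

variable (T : TreeData V)

/-- The Cesàro map as a linear map on all functions `V → ℂ`. -/
def cesaroₗ : (V → ℂ) →ₗ[ℂ] V → ℂ where
  toFun := T.cesaro
  map_add' f g := by
    ext v
    simp only [cesaro, Pi.add_apply, Finset.sum_add_distrib, mul_add]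
  map_smul' c f := by
    ext v
    simp only [cesaro, Pi.smul_apply, smul_eq_mul, RingHom.id_apply, ← Finset.mul_sum]
    ring

lemma norm_cesaro_single_one_le [DecidableEq V] (p v : V) :
    ‖T.cesaro (Pi.single p 1) v‖ ≤ ‖T.weight v‖ := by
  have hcard : {j ∈ Finset.range (T.dep v + 1) | T.par^[j] v = p}.card ≤ 1 := by
    refine Finset.card_le_one.2 fun a ha b hb => ?_
    simp only [Finset.mem_filter, Finset.mem_range] at ha hb
    have hdep := (T.dep_par_iterate v a).symm.trans
      ((congrArg T.dep (ha.2.trans hb.2.symm)).trans (T.dep_par_iterate v b))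
    omega
  rw [cesaro, norm_mul]
  refine mul_le_of_le_one_right (norm_nonneg _) ?_
  simp only [Pi.single_apply, Finset.sum_boole, Complex.norm_natCast]
  exact_mod_cast hcard

variable {T}

lemma exists_isCompactOperator_cesaro_indicator (hT : Memℓp T.weight 2) {s : Set V}
    (hs : s.Finite) :
    ∃ F : L2 V →L[ℂ] L2 V, IsCompactOperator F ∧
      ∀ f : L2 V, ⇑(F f) = T.cesaro (s.indicator f) := by
  classical
  let g (p : V) : L2 V := ⟨T.cesaro (Pi.single p 1), hT.mono' (T.norm_cesaro_single_one_le p)⟩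
  refine ⟨∑ p ∈ hs.toFinset, (lp.evalCLM ℂ (fun _ => ℂ) 2 p).smulRight (g p),
    isCompactOperator_sum _ fun p _ => ?_, fun f => ?_⟩
  · exact (isCompactOperator_of_locallyCompactSpace_dom
      (lp.evalCLM ℂ (fun _ : V => ℂ) 2 p)).clm_comp (.toSpanSingleton ℂ (g p))
  · have hsingle : s.indicator f = ∑ p ∈ hs.toFinset, f p • Pi.single p (1 : ℂ) := by
      ext v
      simp [Finset.sum_apply, Pi.single_apply, Set.indicator_apply]
    change _ = T.cesaroₗ (s.indicator f)
    rw [hsingle, map_sum]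
    simp only [map_smul, sum_apply, lp.coeFn_sum, ContinuousLinearMap.smulRight_apply,
      lp.coeFn_smul]
    rfl

end FiniteSupport

namespace RayDecomposition

variable {T : TreeData V} {k : ℕ} {ι κ : Type} (Φ : T.RayDecomposition k ι κ)

lemma cesaro_indicator_compl_inl (f : V → ℂ) (i : ι) :
    T.cesaro ({v | T.dep v < k}ᶜ.indicator f) (Φ.toEquiv (.inl i)) = 0 := by
  refine mul_eq_zero_of_right _ (Finset.sum_eq_zero fun m _ => Set.indicator_of_notMem ?_ _)
  simp only [Set.mem_compl_iff, not_not, Set.mem_ofPred_eq, T.dep_par_iterate]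
  exact (Nat.sub_le _ _).trans_lt (Φ.dep_inl i)

lemma cesaro_indicator_compl_inr (f : V → ℂ) (j : κ) (n : ℕ) :
    T.cesaro ({v | T.dep v < k}ᶜ.indicator f) (Φ.toEquiv (.inr (j, n))) =
      T.weight (Φ.toEquiv (.inr (j, n))) *
        ∑ m ∈ Finset.range (n + 1), f (Φ.toEquiv (.inr (j, m))) := by
  have hdep (m : ℕ) : T.dep (T.par^[m] (Φ.toEquiv (.inr (j, n)))) = k + n - m := by
    rw [T.dep_par_iterate, Φ.dep_inr]
  unfold cesaro weight
  congr 1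
  rw [← Finset.sum_range_reflect (fun m => f (Φ.toEquiv (.inr (j, m)))) (n + 1), Φ.dep_inr]
  symm
  refine Finset.sum_subset_zero_on_sdiff (Finset.range_mono (by omega)) (fun m hm => ?_)
    fun m hm => ?_
  · refine Set.indicator_of_notMem ?_ _
    simp only [Finset.mem_sdiff, Finset.mem_range] at hm
    simp only [Set.mem_compl_iff, not_not, Set.mem_ofPred_eq, hdep]
    omega
  · have hmn : n - m + m = n := Nat.sub_add_cancel (Finset.mem_range_succ_iff.1 hm)
    have hmem : T.par^[m] (Φ.toEquiv (.inr (j, n))) ∈ {v | T.dep v < k}ᶜ := by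
      simp only [Set.mem_compl_iff, Set.mem_ofPred_eq, hdep]
      omega
    rw [Set.indicator_of_mem hmem, Nat.add_sub_cancel, ← Φ.par_iterate_inr j (n - m) m, hmn]

variable [Fintype ι] [Fintype κ]

/-- The operator on `ℓ²(V)` acting as `R` along each ray and as zero on the vertices of depth
`< k`. -/
def onRays (R : L2 ℕ →L[ℂ] L2 ℕ) : L2 V →L[ℂ] L2 V :=
  let U := (L2.sumProdIsometry Φ.toEquiv).toContinuousLinearEquiv
  U.symm.toContinuousLinearMap ∘L zeroDirectSum (EuclideanSpace ℂ ι) (L2 ℕ) κ R ∘L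
    U.toContinuousLinearMap

lemma onRays_inl (R : L2 ℕ →L[ℂ] L2 ℕ) (f : L2 V) (i : ι) :
    Φ.onRays R f (Φ.toEquiv (.inl i)) = 0 :=
  L2.glue_inl Φ.toEquiv _ _ i

lemma onRays_inr (R : L2 ℕ →L[ℂ] L2 ℕ) (f : L2 V) (j : κ) (n : ℕ) :
    Φ.onRays R f (Φ.toEquiv (.inr (j, n))) =
      R (L2.restrictInr Φ.toEquiv f j) n :=
  L2.glue_inr Φ.toEquiv _ _ j n

theorem cesaro_eq_onRays_add {C0 : L2 ℕ →L[ℂ] L2 ℕ}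
    (hC0 : ∀ (x : L2 ℕ) (n : ℕ), C0 x n = ((n : ℂ) + 1)⁻¹ * ∑ j ∈ Finset.range (n + 1), x j)
    (f : L2 V) (v : V) :
    T.cesaro f v = Φ.onRays C0 f v +
      (T.cesaro ({v | T.dep v < k}.indicator f) v - k * (T.weight v * Φ.onRays C0 f v)) := by
  have hsplit : T.cesaro f v = T.cesaro ({v | T.dep v < k}.indicator f) v +
      T.cesaro ({v | T.dep v < k}ᶜ.indicator f) v := by
    conv_lhs => rw [← Set.indicator_self_add_compl {v | T.dep v < k} ⇑f]
    exact congrFun (map_add T.cesaroₗ _ _) v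
  rw [hsplit]
  obtain ⟨i | ⟨j, n⟩, rfl⟩ := Φ.toEquiv.surjective v
  · rw [Φ.cesaro_indicator_compl_inl, Φ.onRays_inl]
    ring
  · rw [Φ.cesaro_indicator_compl_inr, Φ.onRays_inr, hC0, weight, Φ.dep_inr]
    have hn : (n : ℂ) + 1 ≠ 0 := Nat.cast_add_one_ne_zero n
    have hkn : ((k + n : ℕ) : ℂ) + 1 ≠ 0 := Nat.cast_add_one_ne_zero (k + n)
    change _ + _ * ∑ m ∈ Finset.range (n + 1), L2.restrictInr Φ.toEquiv f j m = _
    field_simp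
    push_cast
    ring

end RayDecomposition

end TreeData

lemma nonempty_fin_equiv_of_encard_eq {α : Type*} {s : Set α} {n : ℕ} (h : s.encard = n) :
    Nonempty (Fin n ≃ s) := by
  have : Finite s := Set.finite_of_encard_eq_coe h
  exact ⟨(Finite.equivFinOfCardEq (by
    rw [Nat.card_coe_set_eq, Set.ncard_def, h, ENat.toNat_natCast])).symm⟩

theorem cesaro_essentially_direct_sum_general {V : Type} (T : TreeData V)
    (hleafless : ∀ u : V, (T.chi u).Nonempty)
    (k : ℕ) (hbranch : ∀ v : V, T.branching v → T.dep v < k)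
    (d : ℕ) (hd : (T.level k).encard = d)
    (N : ℕ) (hN : {v : V | T.dep v < k}.encard = N)
    (C0 : L2 ℕ →L[ℂ] L2 ℕ)
    (hC0 : ∀ (x : L2 ℕ) (n : ℕ), C0 x n = ((n : ℂ) + 1)⁻¹ * ∑ j ∈ Finset.range (n + 1), x j) :
    ∃ (C : L2 V →L[ℂ] L2 V)
      (U : L2 V ≃ₗᵢ[ℂ] WithLp 2 (EuclideanSpace ℂ (Fin N) × PiLp 2 (fun _ : Fin d => L2 ℕ)))
      (K : L2 V →L[ℂ] L2 V),
      (∀ (f : L2 V) (v : V), C f v = T.cesaro ⇑f v) ∧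
      IsCompactOperator ⇑K ∧
      ∀ f : L2 V,
        C f = U.symm ((WithLp.equiv 2 _).symm
            ((0 : EuclideanSpace ℂ (Fin N)),
             (WithLp.equiv 2 (∀ _ : Fin d, L2 ℕ)).symm
               (fun i => C0 (((WithLp.equiv 2 _) (U f)).2 i)))) + K f := by
  have hfinite : {v : V | T.dep v < k}.Finite := Set.finite_of_encard_eq_coe hN
  obtain ⟨a⟩ := nonempty_fin_equiv_of_encard_eq hN
  obtain ⟨b⟩ := nonempty_fin_equiv_of_encard_eq hd
  obtain ⟨Φ⟩ := TreeData.nonempty_rayDecomposition hleafless hbranch a b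
  have hweight : Memℓp T.weight 2 := Φ.memℓp_weight
  obtain ⟨F, hFcompact, hF⟩ := TreeData.exists_isCompactOperator_cesaro_indicator hweight hfinite
  let K : L2 V →L[ℂ] L2 V := F - (k : ℂ) • (T.weightMul ∘L Φ.onRays C0)
  refine ⟨Φ.onRays C0 + K, L2.sumProdIsometry Φ.toEquiv, K, fun f v => ?_, ?_, fun f => rfl⟩
  · rw [Φ.cesaro_eq_onRays_add hC0, ← hF]
    rfl
  · exact hFcompact.sub (((TreeData.isCompactOperator_weightMul hweight).comp_clm _).smul _)

/-- A leafless, locally finite rooted directed tree of finite branching index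
`k_T` with `d = card Chi^⟨k_T⟩(root)` and `N = card {v : dep v < k_T}` has a bounded Cesàro
operator `C_T`, which equals `U* (0 ⊕ C₀ ⊕ ⋯ ⊕ C₀) U + K` for some unitary
`U : ℓ²(V) → ℂ^N ⊕ (ℓ²(ℕ))^{⊕ d}` and compact `K`; i.e. `C_T` is essentially equivalent to the
`d`-fold direct sum of the classical Cesàro operator `C₀`. -/
theorem cesaro_essentially_direct_sum {V : Type} [Countable V] [Infinite V]
    (T : TreeData V)
    (hleafless : ∀ u : V, (T.chi u).Nonempty)
    (hlocfin : ∀ u : V, (T.chi u).Finite)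
    (kT : ℕ) (hkT : T.isBranchingIndex kT)
    (d : ℕ) (hd : (T.level kT).encard = d) (hd0 : 0 < d)
    (N : ℕ) (hN : {v : V | T.dep v < kT}.encard = N)
    (C0 : L2 ℕ →L[ℂ] L2 ℕ)
    (hC0 : ∀ (x : L2 ℕ) (n : ℕ), C0 x n = ((n : ℂ) + 1)⁻¹ * ∑ j ∈ Finset.range (n + 1), x j) :
    ∃ (C : L2 V →L[ℂ] L2 V)
      (U : L2 V ≃ₗᵢ[ℂ] WithLp 2 (EuclideanSpace ℂ (Fin N) × PiLp 2 (fun _ : Fin d => L2 ℕ)))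
      (K : L2 V →L[ℂ] L2 V),
      (∀ (f : L2 V) (v : V), C f v = T.cesaro ⇑f v) ∧
      IsCompactOperator ⇑K ∧
      ∀ f : L2 V,
        C f = U.symm ((WithLp.equiv 2 _).symm
            ((0 : EuclideanSpace ℂ (Fin N)),
             (WithLp.equiv 2 (∀ _ : Fin d, L2 ℕ)).symm
               (fun i => C0 (((WithLp.equiv 2 _) (U f)).2 i)))) + K f :=
  cesaro_essentially_direct_sum_general T hleafless kT hkT.1 d hd N hN C0 hC0
end
end
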